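/- Correctness of the QBF reduction: let Q_k x_k … Q₁ x₁ ψ be a fully quantified Boolean formula with Q_i ∈ {∀,∃} and ψ a propositional formula mentioning negation only in front of variables. Let T and W be two distinct standard names and f_i, f'_i (i ∈ {1,…,k}) pairwise distinct function terms. Define the translation ∗ by: x_i∗ = (f_i ≈ T); (¬x_i)∗ = (f_i ≉ T) if Q_i = ∀ and (f'_i ≈ T) if Q_i = ∃; (ψ₁ ∨ ψ₂)∗ = ψ₁∗ ∨ ψ₂∗; (ψ₁ ∧ ψ₂)∗ = ψ₁∗ ∧ ψ₂∗. For Q_i = ∀ let F_i = {f_i} and N_i = the set of all standard names distinct from W; for Q_i = ∃ let F_i = {f_i, f'_i} and N_i = {T}. Then the quantified Boolean formula evaluates to TRUE if and only if: for some t_k ∈ F_k, for all n_k ∈ N_k, …, for some t₁ ∈ F₁, for all n₁ ∈ N₁, {t₁ ≈ n₁,…,t_k ≈ n_k} ⊨ˢ ψ∗. -/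

import Mathlib

/-! ## Limited belief: basic syntax and semantics (Schwering 2017, quantifier-free). -/

/-- Standard names (a countably infinite supply). -/
abbrev Name := ℕ

/-- Function terms `f(n₁,…,n_j)`: a function symbol applied to standard names. -/
structure FnTerm where
  sym : ℕ
  args : List Name
deriving DecidableEq, Inhabited

/-- Literals `t ≈ n` (pos) and `t ≉ n` (neg). -/
inductive Lit where
  | pos (t : FnTerm) (n : Name)
  | neg (t : FnTerm) (n : Name)
deriving DecidableEq

instance : Inhabited Lit := ⟨.pos default 0⟩

/-- The left-hand side (function term) of a literal. -/
def Lit.lhs : Lit → FnTerm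
  | .pos t _ => t
  | .neg t _ => t

/-- The right-hand side (standard name) of a literal. -/
def Lit.rhs : Lit → Name
  | .pos _ n => n
  | .neg _ n => n

/-- The negation `¬ℓ` of a literal. -/
def Lit.negate : Lit → Lit
  | .pos t n => .neg t n
  | .neg t n => .pos t n

/-- Names occurring in a literal. -/
def Lit.names (ℓ : Lit) : Finset Name := insert ℓ.rhs ℓ.lhs.args.toFinset

/-- Two literals are complementary iff they are of the form `t ≈ n` and `t ≉ n`,
or of the form `t ≈ n` and `t ≈ n'` for distinct `n, n'`. -/
def Lit.complementary : Lit → Lit → Bool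
  | .pos t n, .neg t' n' => t == t' && n == n'
  | .neg t n, .pos t' n' => t == t' && n == n'
  | .pos t n, .pos t' n' => t == t' && n != n'
  | .neg _ _, .neg _ _ => false

/-- A clause is a (finite) set of literals. -/
abbrev Clause := Finset Lit

/-- Unit propagation of clause `c` with literal `ℓ`: remove from `c` all
literals complementary to `ℓ`. -/
def Clause.prop (c : Clause) (ℓ : Lit) : Clause :=
  c.filter (fun ℓ' => Lit.complementary ℓ' ℓ = false)

/-- `c₁` subsumes `c₂` iff for every `t ≈ n ∈ c₁`, `t ≈ n ∈ c₂` or `t ≉ n' ∈ c₂`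
for some `n' ≠ n`, and for every `t ≉ n ∈ c₁`, `t ≉ n ∈ c₂`. -/
def Clause.subsumes (c₁ c₂ : Clause) : Prop :=
  (∀ t n, Lit.pos t n ∈ c₁ → Lit.pos t n ∈ c₂ ∨ ∃ n', n' ≠ n ∧ Lit.neg t n' ∈ c₂) ∧
  (∀ t n, Lit.neg t n ∈ c₁ → Lit.neg t n ∈ c₂)

/-- `UP s`: the closure of the set of clauses `s` under unit propagation and
subsumption.  `UP s c` means `c ∈ UP(s)`. -/
inductive UP (s : Set Clause) : Clause → Prop
  | mem {c : Clause} : c ∈ s → UP s c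
  | unit {c : Clause} {ℓ : Lit} : UP s {ℓ} → UP s c → UP s (c.prop ℓ)
  | sub {c₁ c₂ : Clause} : UP s c₁ → c₁.subsumes c₂ → UP s c₂

/-- Objective formulas: literals (`atom` is `t ≈ n`, `not atom` is `t ≉ n`),
negation and disjunction. -/
inductive Form where
  | atom (t : FnTerm) (n : Name)
  | not (φ : Form)
  | or (φ ψ : Form)
deriving DecidableEq

/-- `α ∧ β` abbreviates `¬(¬α ∨ ¬β)`. -/
def Form.and (φ ψ : Form) : Form := .not (.or (.not φ) (.not ψ))

/-- `α → β` abbreviates `¬α ∨ β`. -/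
def Form.imp (φ ψ : Form) : Form := .or (.not φ) ψ

/-- A formula is (syntactically) a clause iff it is a disjunction of literals. -/
def Form.isClause : Form → Bool
  | .atom _ _ => true
  | .not (.atom _ _) => true
  | .not _ => false
  | .or φ ψ => φ.isClause && ψ.isClause

/-- The set of literals of a clause-formula. -/
def Form.lits : Form → Clause
  | .atom t n => {Lit.pos t n}
  | .not (.atom t n) => {Lit.neg t n}
  | .not _ => ∅
  | .or φ ψ => φ.lits ∪ ψ.lits

/-- The limited-belief truth relation `s ⊨ˢ α` for objective formulas:
a clause is true iff it is in `UP(s)`; a non-clause disjunction is true iff one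
of its disjuncts is; `¬(α ∨ β)` is true iff `¬α` and `¬β` are; `¬¬α` is true
iff `α` is. -/
def sat (s : Set Clause) : Form → Prop
  | .atom t n => UP s {Lit.pos t n}
  | .not (.atom t n) => UP s {Lit.neg t n}
  | .not (.not φ) => sat s φ
  | .not (.or φ ψ) => sat s (.not φ) ∧ sat s (.not ψ)
  | .or φ ψ => if (Form.or φ ψ).isClause then UP s (Form.or φ ψ).lits
               else sat s φ ∨ sat s ψ

/-- `satB s k α` is `s ⊨ˢ B_k α`: `B₀ α` holds iff `α` does, and `B_{k+1} α`
holds iff for some function term `t`, for all names `n`,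
`s ∪ {t ≈ n} ⊨ˢ B_k α`. -/
def satB (s : Set Clause) : ℕ → Form → Prop
  | 0, φ => sat s φ
  | k+1, φ => ∃ t : FnTerm, ∀ n : Name, satB (s ∪ {({Lit.pos t n} : Clause)}) k φ

/-- A world maps function terms to standard names. -/
abbrev World := FnTerm → Name

/-- Classical truth of a literal in a world. -/
def Lit.holds (w : World) : Lit → Prop
  | .pos t n => w t = n
  | .neg t n => w t ≠ n

/-- Classical truth of a clause in a world. -/
def Clause.holds (w : World) (c : Clause) : Prop := ∃ ℓ ∈ c, ℓ.holds w

/-- Classical truth of an objective formula in a world. -/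
def wsat (w : World) : Form → Prop
  | .atom t n => w t = n
  | .not φ => ¬ wsat w φ
  | .or φ ψ => wsat w φ ∨ wsat w ψ

/-- Classical entailment `s ⊨ α`. -/
def entails (s : Set Clause) (φ : Form) : Prop :=
  ∀ w : World, (∀ c ∈ s, c.holds w) → wsat w φ

/-- Classical entailment of a clause (disjunction of its literals). -/
def entailsClause (s : Set Clause) (c : Clause) : Prop :=
  ∀ w : World, (∀ c' ∈ s, c'.holds w) → c.holds w

/-- Function terms mentioned in a formula. -/
def Form.terms : Form → Finset FnTerm
  | .atom t _ => {t}
  | .not φ => φ.terms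
  | .or φ ψ => φ.terms ∪ ψ.terms

/-- Standard names mentioned in a formula. -/
def Form.names : Form → Finset Name
  | .atom t n => insert n t.args.toFinset
  | .not φ => φ.names
  | .or φ ψ => φ.names ∪ ψ.names

/-- Propositional formulas in negation normal form (negation only in front of
variables). -/
inductive PProp where
  | var (i : ℕ)
  | nvar (i : ℕ)
  | conj (φ ψ : PProp)
  | disj (φ ψ : PProp)

/-- Propositional evaluation. -/
def PProp.eval (v : ℕ → Bool) : PProp → Bool
  | .var i => v i
  | .nvar i => !(v i)
  | .conj φ ψ => φ.eval v && ψ.eval v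
  | .disj φ ψ => φ.eval v || ψ.eval v

/-- Variables mentioned in a propositional formula. -/
def PProp.propVars : PProp → Finset ℕ
  | .var i => {i}
  | .nvar i => {i}
  | .conj φ ψ => φ.propVars ∪ ψ.propVars
  | .disj φ ψ => φ.propVars ∪ ψ.propVars

/-- Truth of the quantified Boolean formula `Q_i x_i … Q₁ x₁ ψ` under a partial
assignment `v` of the remaining variables; `Q i = true` means `x_i` is
universally quantified, `Q i = false` means it is existentially quantified. -/
def qbfEval (Q : ℕ → Bool) (ψ : PProp) : ℕ → (ℕ → Bool) → Prop
  | 0, v => ψ.eval v = true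
  | i + 1, v =>
      if Q (i + 1) then ∀ b : Bool, qbfEval Q ψ i (Function.update v (i + 1) b)
      else ∃ b : Bool, qbfEval Q ψ i (Function.update v (i + 1) b)

/-- The translation `∗` from the QBF matrix to objective formulas:
`x_i∗ = f_i ≈ T`; `(¬x_i)∗` is `f_i ≉ T` if `x_i` is universal and `f'_i ≈ T`
if it is existential; `∗` commutes with `∨` and `∧`. -/
def qbfTrans (Q : ℕ → Bool) (f f' : ℕ → FnTerm) (T : Name) : PProp → Form
  | .var i => .atom (f i) T
  | .nvar i => if Q i then .not (.atom (f i) T) else .atom (f' i) T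
  | .conj φ ψ => Form.and (qbfTrans Q f f' T φ) (qbfTrans Q f f' T ψ)
  | .disj φ ψ => Form.or (qbfTrans Q f f' T φ) (qbfTrans Q f f' T ψ)

/-- The alternating chain `∃ t_i ∈ F_i, ∀ n_i ∈ N_i, …, ∃ t₁ ∈ F₁, ∀ n₁ ∈ N₁,
P (s ∪ {t₁ ≈ n₁, …, t_i ≈ n_i})`. -/
def chainSet (F : ℕ → Set FnTerm) (N : ℕ → Set Name) (P : Set Clause → Prop) :
    ℕ → Set Clause → Prop
  | 0, s => P s
  | i + 1, s => ∃ t ∈ F (i + 1), ∀ n ∈ N (i + 1),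
      chainSet F N P i (s ∪ {({Lit.pos t n} : Clause)})

/-!
The clause set reached in a play is the set of unit clauses of a partial world, that is, of a
partial function from terms to names. Over such a set, `UP` contains a clause exactly when the
partial world verifies one of its literals, so the limited truth relation commutes with disjunction
and `ψ∗` holds exactly when `ψ` is true as soon as this is so for the literals of `ψ`.

A universal move `f_i ≈ n` makes `x_i` true when `n = T` and false otherwise. Both cases occur
because `T` and a third name differ from `W`. An existential move asserts `f_i ≈ T` or `f'_i ≈ T`
and leaves the other term undefined, so it chooses the value of `x_i`.
-/

/-- A partial function from terms to names: the information carried by a consistent set of unit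
clauses `t ≈ n`. -/
abbrev PartialWorld : Type := FnTerm → Option Name

/-- The unit clauses `t ≈ n` recording the values of a partial world. -/
def PartialWorld.units (g : PartialWorld) : Set Clause :=
  {c | ∃ t n, g t = some n ∧ c = {Lit.pos t n}}

/-- Truth of a literal that is already settled by a partial world; a negative literal, too, requires
the term to have a value. -/
def Lit.VerifiedBy (g : PartialWorld) : Lit → Prop
  | .pos t n => g t = some n
  | .neg t n => ∃ m, m ≠ n ∧ g t = some m

theorem Clause.singleton_pos_subsumes_of_mem_pos {c : Clause} {t : FnTerm} {n : Name}
    (h : Lit.pos t n ∈ c) : Clause.subsumes {Lit.pos t n} c := by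
  simp_all [Clause.subsumes]

theorem Clause.singleton_pos_subsumes_of_mem_neg {c : Clause} {t : FnTerm} {m n : Name}
    (h : Lit.neg t n ∈ c) (hmn : m ≠ n) : Clause.subsumes {Lit.pos t m} c := by
  refine ⟨fun t' n' h' ↦ ?_, fun t' n' h' ↦ by simp at h'⟩
  obtain ⟨rfl, rfl⟩ : t' = t ∧ n' = m := by simpa using h'
  exact .inr ⟨n, hmn.symm, h⟩

section UnitPropagation

variable {g : PartialWorld}

theorem Lit.VerifiedBy.complementary_eq_false {ℓ ℓ' : Lit} (h : ℓ.VerifiedBy g)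
    (h' : ℓ'.VerifiedBy g) : ℓ.complementary ℓ' = false := by
  cases ℓ <;> cases ℓ' <;> simp only [Lit.VerifiedBy, Lit.complementary] at * <;> grind

theorem Clause.subsumes.exists_verifiedBy {c₁ c₂ : Clause} (hsub : c₁.subsumes c₂)
    (h : ∃ ℓ ∈ c₁, ℓ.VerifiedBy g) : ∃ ℓ ∈ c₂, ℓ.VerifiedBy g := by
  obtain ⟨ℓ, hmem, hℓ⟩ := h
  cases ℓ with
  | pos t n =>
    rcases hsub.1 t n hmem with hpos | ⟨m, hmn, hneg⟩
    · exact ⟨_, hpos, hℓ⟩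
    · exact ⟨_, hneg, n, hmn.symm, hℓ⟩
  | neg t n => exact ⟨_, hsub.2 t n hmem, hℓ⟩

theorem PartialWorld.up_units_iff {c : Clause} : UP g.units c ↔ ∃ ℓ ∈ c, ℓ.VerifiedBy g := by
  constructor
  · intro h
    induction h with
    | mem hc =>
      obtain ⟨t, n, hg, rfl⟩ := hc
      exact ⟨_, Finset.mem_singleton_self _, hg⟩
    | unit _ _ ihUnit ihClause =>
      obtain ⟨ℓ, hℓ, hver⟩ := ihUnit
      obtain ⟨ℓ', hℓ', hver'⟩ := ihClause
      obtain rfl := Finset.mem_singleton.1 hℓ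
      exact ⟨ℓ', Finset.mem_filter.2 ⟨hℓ', hver'.complementary_eq_false hver⟩, hver'⟩
    | sub _ hsub ih => exact hsub.exists_verifiedBy ih
  · rintro ⟨ℓ, hmem, hℓ⟩
    cases ℓ with
    | pos t n => exact .sub (.mem ⟨t, n, hℓ, rfl⟩) (Clause.singleton_pos_subsumes_of_mem_pos hmem)
    | neg t n =>
      obtain ⟨m, hmn, hm⟩ := hℓ
      exact .sub (.mem ⟨t, m, hm, rfl⟩) (Clause.singleton_pos_subsumes_of_mem_neg hmem hmn)

theorem PartialWorld.units_update {t : FnTerm} (ht : g t = none) (n : Name) :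
    PartialWorld.units (Function.update g t (some n)) = g.units ∪ {{Lit.pos t n}} := by
  ext c
  constructor
  · rintro ⟨t', n', hg, rfl⟩
    by_cases h : t' = t
    · obtain rfl : n = n' := by simpa [h] using hg
      exact .inr (by rw [h]; rfl)
    · exact .inl ⟨t', n', by simpa [h] using hg, rfl⟩
  · rintro (⟨t', n', hg, rfl⟩ | rfl)
    · have hne : t' ≠ t := by grind
      exact ⟨t', n', by simpa [hne] using hg, rfl⟩
    · exact ⟨t, n, by simp, rfl⟩

end UnitPropagation

section Satisfaction

theorem sat_iff_up_lits_of_isClause {s : Set Clause} {α : Form} (h : α.isClause = true) :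
    sat s α ↔ UP s α.lits := by
  match α with
  | .atom _ _ | .not (.atom _ _) => simp only [sat, Form.lits]
  | .or _ _ => rw [sat, if_pos h]

theorem sat_and {s : Set Clause} {α β : Form} : sat s (α.and β) ↔ sat s α ∧ sat s β := by
  simp only [Form.and, sat]

variable {g : PartialWorld}

theorem sat_units_or {α β : Form} : sat g.units (α.or β) ↔ sat g.units α ∨ sat g.units β := by
  by_cases h : (α.or β).isClause = true
  · obtain ⟨hα, hβ⟩ : α.isClause = true ∧ β.isClause = true := by
      simpa only [Form.isClause, Bool.and_eq_true] using h
    simp only [sat_iff_up_lits_of_isClause, h, hα, hβ, PartialWorld.up_units_iff, Form.lits,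
      Finset.mem_union, or_and_right, exists_or]
  · rw [sat, if_neg h]

theorem sat_units_atom {t : FnTerm} {n : Name} : sat g.units (.atom t n) ↔ g t = some n := by
  simp only [sat, PartialWorld.up_units_iff, Finset.mem_singleton, exists_eq_left, Lit.VerifiedBy]

theorem sat_units_not_atom {t : FnTerm} {n : Name} :
    sat g.units (.not (.atom t n)) ↔ ∃ m, m ≠ n ∧ g t = some m := by
  simp only [sat, PartialWorld.up_units_iff, Finset.mem_singleton, exists_eq_left, Lit.VerifiedBy]

end Satisfaction

/-- The set `F_j` of terms the existential player may pick at variable `x_j`. -/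
def choiceTerms (Q : ℕ → Bool) (f f' : ℕ → FnTerm) (j : ℕ) : Set FnTerm :=
  if Q j then {f j} else {f j, f' j}

/-- The set `N_j` of names the universal player may answer with at variable `x_j`. -/
def choiceNames (Q : ℕ → Bool) (T W : Name) (j : ℕ) : Set Name :=
  if Q j then {n | n ≠ W} else {T}

theorem pairwiseDisjoint_choiceTerms {Q : ℕ → Bool} {f f' : ℕ → FnTerm} {s : Set ℕ}
    (hf : s.InjOn f) (hf' : s.InjOn f') (hff' : ∀ i ∈ s, ∀ j ∈ s, f i ≠ f' j) :
    s.PairwiseDisjoint (choiceTerms Q f f') := by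
  intro i hi j hj hij
  have hsub (l : ℕ) : choiceTerms Q f f' l ⊆ {f l, f' l} := by
    rw [choiceTerms]
    split <;> simp
  refine Set.disjoint_of_subset (hsub i) (hsub j) ?_
  simp [hf.ne hj hi hij.symm, hf'.ne hj hi hij.symm, hff' j hj i hi, (hff' i hi j hj).symm]

/-- The partial world `g` gives `x_j` the truth value `b`: the translations of `x_j` and `¬x_j` hold
in the limited sense exactly as `b` prescribes. -/
def Represents (Q : ℕ → Bool) (f f' : ℕ → FnTerm) (T : Name) (g : PartialWorld) (j : ℕ)
    (b : Bool) : Prop :=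
  (sat g.units (qbfTrans Q f f' T (.var j)) ↔ b = true) ∧
    (sat g.units (qbfTrans Q f f' T (.nvar j)) ↔ b = false)

section Translation

variable {Q : ℕ → Bool} {f f' : ℕ → FnTerm} {T : Name} {g : PartialWorld}

theorem sat_units_qbfTrans_var {j : ℕ} :
    sat g.units (qbfTrans Q f f' T (.var j)) ↔ g (f j) = some T := by
  rw [qbfTrans, sat_units_atom]

theorem sat_units_qbfTrans_nvar_of_universal {j : ℕ} (hQ : Q j = true) :
    sat g.units (qbfTrans Q f f' T (.nvar j)) ↔ ∃ m, m ≠ T ∧ g (f j) = some m := by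
  rw [qbfTrans, if_pos hQ, sat_units_not_atom]

theorem sat_units_qbfTrans_nvar_of_existential {j : ℕ} (hQ : Q j = false) :
    sat g.units (qbfTrans Q f f' T (.nvar j)) ↔ g (f' j) = some T := by
  rw [qbfTrans, if_neg (by simp [hQ]), sat_units_atom]

theorem sat_units_qbfTrans_iff_eval {v : ℕ → Bool} {ψ : PProp}
    (h : ∀ j ∈ ψ.propVars, Represents Q f f' T g j (v j)) :
    sat g.units (qbfTrans Q f f' T ψ) ↔ ψ.eval v = true := by
  induction ψ with
  | var j => exact (h j (Finset.mem_singleton_self j)).1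
  | nvar j => simpa [PProp.eval] using (h j (Finset.mem_singleton_self j)).2
  | conj φ χ ihφ ihχ =>
    rw [qbfTrans, sat_and, ihφ fun j hj ↦ h j (Finset.mem_union_left _ hj),
      ihχ fun j hj ↦ h j (Finset.mem_union_right _ hj), PProp.eval, Bool.and_eq_true]
  | disj φ χ ihφ ihχ =>
    rw [qbfTrans, sat_units_or, ihφ fun j hj ↦ h j (Finset.mem_union_left _ hj),
      ihχ fun j hj ↦ h j (Finset.mem_union_right _ hj), PProp.eval, Bool.or_eq_true]

theorem Represents.congr {g' : PartialWorld} {j : ℕ} {b : Bool} (h : Represents Q f f' T g j b)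
    (hg : Set.EqOn g g' (choiceTerms Q f f' j)) : Represents Q f f' T g' j b := by
  cases hQ : Q j with
  | true =>
    have hf : g (f j) = g' (f j) := hg (by simp [choiceTerms, hQ])
    simpa only [Represents, sat_units_qbfTrans_var, sat_units_qbfTrans_nvar_of_universal hQ, hf]
      using h
  | false =>
    have hf : g (f j) = g' (f j) := hg (by simp [choiceTerms, hQ])
    have hf' : g (f' j) = g' (f' j) := hg (by simp [choiceTerms, hQ])
    simpa only [Represents, sat_units_qbfTrans_var, sat_units_qbfTrans_nvar_of_existential hQ,
      hf, hf'] using h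

theorem represents_decide_of_universal {j : ℕ} {n : Name} (hQ : Q j = true)
    (hn : g (f j) = some n) : Represents Q f f' T g j (decide (n = T)) := by
  simp [Represents, sat_units_qbfTrans_var, sat_units_qbfTrans_nvar_of_universal hQ, hn]

theorem represents_true_of_existential {j : ℕ} (hQ : Q j = false) (hf : g (f j) = some T)
    (hf' : g (f' j) = none) : Represents Q f f' T g j true := by
  simp [Represents, sat_units_qbfTrans_var, sat_units_qbfTrans_nvar_of_existential hQ, hf, hf']

theorem represents_false_of_existential {j : ℕ} (hQ : Q j = false) (hf : g (f j) = none)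
    (hf' : g (f' j) = some T) : Represents Q f f' T g j false := by
  simp [Represents, sat_units_qbfTrans_var, sat_units_qbfTrans_nvar_of_existential hQ, hf, hf']

end Translation

/-- The invariant of a play in which `x_k, …, x_{i+1}` have been treated: the partial world `g`
gives these variables their values under `v` and is undefined on the terms of `x_i, …, x_1`. -/
structure EncodesAbove (Q : ℕ → Bool) (f f' : ℕ → FnTerm) (T : Name) (k i : ℕ) (g : PartialWorld)
    (v : ℕ → Bool) : Prop where
  represents : ∀ j ∈ Set.Ioc i k, Represents Q f f' T g j (v j)
  eq_none : ∀ j ∈ Set.Icc 1 i, ∀ t ∈ choiceTerms Q f f' j, g t = none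

section Play

variable {Q : ℕ → Bool} {f f' : ℕ → FnTerm} {T W : Name} {k i : ℕ} {g : PartialWorld} {v : ℕ → Bool}

theorem encodesAbove_none : EncodesAbove Q f f' T k k (fun _ ↦ none) v where
  represents _ hj := absurd hj.1 hj.2.not_gt
  eq_none _ _ _ _ := rfl

theorem EncodesAbove.update (hdisj : (Set.Icc 1 k).PairwiseDisjoint (choiceTerms Q f f'))
    (hi : i + 1 ≤ k) (h : EncodesAbove Q f f' T k (i + 1) g v) {t : FnTerm} {n : Name} {b : Bool}
    (ht : t ∈ choiceTerms Q f f' (i + 1))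
    (hb : Represents Q f f' T (Function.update g t (some n)) (i + 1) b) :
    EncodesAbove Q f f' T k i (Function.update g t (some n)) (Function.update v (i + 1) b) := by
  have heqOn {j : ℕ} (hj : j ∈ Set.Icc 1 k) (hne : j ≠ i + 1) :
      Set.EqOn g (Function.update g t (some n)) (choiceTerms Q f f' j) := fun t' ht' ↦ by
    have : t' ≠ t := (hdisj hj ⟨by lia, hi⟩ hne).ne_of_mem ht' ht
    rw [Function.update_of_ne this]
  constructor
  · intro j ⟨hij, hjk⟩
    by_cases hne : j = i + 1
    · subst hne
      rwa [Function.update_self]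
    · rw [Function.update_of_ne hne]
      exact (h.represents j ⟨by lia, hjk⟩).congr (heqOn ⟨by lia, hjk⟩ hne)
  · intro j ⟨hj, hji⟩ t' ht'
    rw [← heqOn ⟨hj, by lia⟩ (by lia) ht']
    exact h.eq_none j ⟨hj, by lia⟩ t' ht'

theorem forall_bool_iff_forall_ne_decide_eq {α : Type*} [DecidableEq α] [Infinite α] {a c : α}
    (hac : a ≠ c) {p : Bool → Prop} : (∀ b, p b) ↔ ∀ x ≠ c, p (decide (x = a)) := by
  refine ⟨fun h x _ ↦ h _, fun h b ↦ ?_⟩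
  cases b with
  | true => simpa using h a hac
  | false =>
    obtain ⟨x, hx⟩ := Infinite.exists_notMem_finset {a, c}
    obtain ⟨hxa, hxc⟩ : x ≠ a ∧ x ≠ c := by simpa using hx
    simpa [hxa] using h x hxc

theorem chainSet_succ_of_universal (hQ : Q (i + 1) = true) {P : Set Clause → Prop}
    {s : Set Clause} :
    chainSet (choiceTerms Q f f') (choiceNames Q T W) P (i + 1) s ↔
      ∀ n ≠ W, chainSet (choiceTerms Q f f') (choiceNames Q T W) P i
        (s ∪ {{Lit.pos (f (i + 1)) n}}) := by
  simp [chainSet, choiceTerms, choiceNames, hQ]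

theorem chainSet_succ_of_existential (hQ : Q (i + 1) = false) {P : Set Clause → Prop}
    {s : Set Clause} :
    chainSet (choiceTerms Q f f') (choiceNames Q T W) P (i + 1) s ↔
      chainSet (choiceTerms Q f f') (choiceNames Q T W) P i (s ∪ {{Lit.pos (f (i + 1)) T}}) ∨
      chainSet (choiceTerms Q f f') (choiceNames Q T W) P i (s ∪ {{Lit.pos (f' (i + 1)) T}}) := by
  simp [chainSet, choiceTerms, choiceNames, hQ]

theorem qbfEval_iff_chainSet {ψ : PProp} (hψ : ψ.propVars ⊆ Finset.Icc 1 k) (hTW : T ≠ W)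
    (hdisj : (Set.Icc 1 k).PairwiseDisjoint (choiceTerms Q f f'))
    (hne : ∀ j ∈ Set.Icc 1 k, Q j = false → f j ≠ f' j) (hi : i ≤ k)
    (h : EncodesAbove Q f f' T k i g v) :
    qbfEval Q ψ i v ↔ chainSet (choiceTerms Q f f') (choiceNames Q T W)
      (fun s ↦ sat s (qbfTrans Q f f' T ψ)) i g.units := by
  induction i generalizing g v with
  | zero =>
    exact (sat_units_qbfTrans_iff_eval fun j hj ↦
      h.represents j (Finset.mem_Icc.1 (hψ hj))).symm
  | succ i ih =>
    have hmem : i + 1 ∈ Set.Icc 1 k := ⟨by lia, hi⟩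
    have hnone := h.eq_none (i + 1) ⟨by lia, le_rfl⟩
    have move {t : FnTerm} {n : Name} {b : Bool} (ht : t ∈ choiceTerms Q f f' (i + 1))
        (hb : Represents Q f f' T (Function.update g t (some n)) (i + 1) b) :
        qbfEval Q ψ i (Function.update v (i + 1) b) ↔
          chainSet (choiceTerms Q f f') (choiceNames Q T W)
            (fun s ↦ sat s (qbfTrans Q f f' T ψ)) i (g.units ∪ {{Lit.pos t n}}) := by
      rw [← PartialWorld.units_update (hnone t ht) n]
      exact ih (by lia) (h.update hdisj hi ht hb)
    cases hQ : Q (i + 1) with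
    | true =>
      have hf : f (i + 1) ∈ choiceTerms Q f f' (i + 1) := by simp [choiceTerms, hQ]
      rw [qbfEval, if_pos hQ, chainSet_succ_of_universal hQ,
        forall_bool_iff_forall_ne_decide_eq hTW]
      exact forall₂_congr fun n _ ↦
        move hf (represents_decide_of_universal hQ (Function.update_self ..))
    | false =>
      have hf : f (i + 1) ∈ choiceTerms Q f f' (i + 1) := by simp [choiceTerms, hQ]
      have hf' : f' (i + 1) ∈ choiceTerms Q f f' (i + 1) := by simp [choiceTerms, hQ]
      have hff' := hne (i + 1) hmem hQ
      rw [qbfEval, if_neg (by simp [hQ]), chainSet_succ_of_existential hQ, Bool.exists_bool,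
        or_comm]
      refine or_congr
        (move hf (represents_true_of_existential hQ (Function.update_self ..) ?_))
        (move hf' (represents_false_of_existential hQ ?_ (Function.update_self ..)))
      · rw [Function.update_of_ne hff'.symm, hnone _ hf']
      · rw [Function.update_of_ne hff', hnone _ hf]

end Play

/-- **Correctness of the QBF reduction** (Theorem 8, hardness): the quantified
Boolean formula `Q_k x_k … Q₁ x₁ ψ` evaluates to TRUE iff for some
`t_k ∈ F_k`, for all `n_k ∈ N_k`, …, for some `t₁ ∈ F₁`, for all `n₁ ∈ N₁`,
`{t₁ ≈ n₁, …, t_k ≈ n_k} ⊨ˢ ψ∗`, where `F_i = {f_i}` and `N_i` is the set of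
names distinct from `W` if `Q_i = ∀`, and `F_i = {f_i, f'_i}` and `N_i = {T}`
if `Q_i = ∃`. -/
theorem qbf_reduction (k : ℕ) (Q : ℕ → Bool) (ψ : PProp)
    (hψ : ψ.propVars ⊆ Finset.Icc 1 k)
    (T W : Name) (hTW : T ≠ W)
    (f f' : ℕ → FnTerm)
    (hdist : ∀ i ∈ Finset.Icc 1 k, ∀ j ∈ Finset.Icc 1 k,
      (i ≠ j → f i ≠ f j) ∧ (i ≠ j → f' i ≠ f' j) ∧ f i ≠ f' j) :
    qbfEval Q ψ k (fun _ => false) ↔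
      chainSet
        (fun i => if Q i then ({f i} : Set FnTerm) else {f i, f' i})
        (fun i => if Q i then ({n : Name | n ≠ W} : Set Name) else {T})
        (fun s => sat s (qbfTrans Q f f' T ψ))
        k (∅ : Set Clause) := by
  simp only [Finset.mem_Icc] at hdist
  have hf : (Set.Icc 1 k).InjOn f := fun i hi j hj ↦ not_imp_not.1 (hdist i hi j hj).1
  have hf' : (Set.Icc 1 k).InjOn f' := fun i hi j hj ↦ not_imp_not.1 (hdist i hi j hj).2.1
  have hff' : ∀ i ∈ Set.Icc 1 k, ∀ j ∈ Set.Icc 1 k, f i ≠ f' j :=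
    fun i hi j hj ↦ (hdist i hi j hj).2.2
  have hunits : PartialWorld.units (fun _ ↦ none) = ∅ := by simp [PartialWorld.units]
  rw [← hunits]
  exact qbfEval_iff_chainSet hψ hTW (pairwiseDisjoint_choiceTerms hf hf' hff')
    (fun j hj _ ↦ hff' j hj j hj) le_rfl encodesAbove_none
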